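/- Let X be a smooth extremal surface of degree d = q+1 in ℙ³(k), and let (A, B) be a double 2d all of whose 4d lines lie on X. If d > 10 or d < 5, then the 4d lines of A ∪ B can be partitioned into two quadric configurations on X. Moreover, for d ≥ 5, if the lines of a double 2d on X are the union of two quadric configurations, then this pair of quadric configurations is unique: no other pair of quadric configurations on X has the same union. -/

import Mathlib

open Module

/-! Basic setup: `k` is an algebraically closed field of characteristic `p > 0`,
`q = p^e`.  We model ℙ³(k) via linear subspaces of `k⁴ = Fin 4 → k`:
points, lines and planes of ℙ³(k) are subspaces of dimension 1, 2 and 3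
respectively.  A hypersurface cut out by a homogeneous form is recorded by its
affine cone in `k⁴`. -/

/-- The Frobenius form in 4 variables determined by a 4×4 matrix `A`:
`∑ i j, A i j * x i ^ q * x j`, a homogeneous form of degree `q+1`. -/
def frobForm {k : Type*} [Field k] (q : ℕ) (A : Matrix (Fin 4) (Fin 4) k)
    (x : Fin 4 → k) : k :=
  ∑ i, ∑ j, A i j * x i ^ q * x j

/-- The affine cone in `k⁴` of the extremal surface in ℙ³(k) cut out by the
Frobenius form with matrix `A`; a point of ℙ³(k) lies on the surface iff its
homogeneous coordinate representatives lie in this set. -/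
def extremalCone (k : Type*) [Field k] (q : ℕ) (A : Matrix (Fin 4) (Fin 4) k) :
    Set (Fin 4 → k) :=
  {x | frobForm q A x = 0}

/-- A point of ℙ³(k): a 1-dimensional subspace of `k⁴`. -/
def IsPoint {k : Type*} [Field k] (c : Submodule k (Fin 4 → k)) : Prop :=
  finrank k c = 1

/-- A line of ℙ³(k): a 2-dimensional subspace of `k⁴`. -/
def IsLine {k : Type*} [Field k] (L : Submodule k (Fin 4 → k)) : Prop :=
  finrank k L = 2

/-- A plane of ℙ³(k): a 3-dimensional subspace of `k⁴`. -/
def IsPlane {k : Type*} [Field k] (H : Submodule k (Fin 4 → k)) : Prop :=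
  finrank k H = 3

/-- `L` is a line lying on the surface with affine cone `X`. -/
def IsLineOn {k : Type*} [Field k] (X : Set (Fin 4 → k))
    (L : Submodule k (Fin 4 → k)) : Prop :=
  IsLine L ∧ (L : Set (Fin 4 → k)) ⊆ X

/-- Two lines of ℙ³(k) meet iff the corresponding subspaces of `k⁴` intersect
nontrivially. -/
def MeetsLine {k : Type*} [Field k] (L M : Submodule k (Fin 4 → k)) : Prop :=
  L ⊓ M ≠ ⊥

/-- Two lines of ℙ³(k) are skew iff the corresponding subspaces of `k⁴`
intersect trivially. -/
def SkewLine {k : Type*} [Field k] (L M : Submodule k (Fin 4 → k)) : Prop :=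
  L ⊓ M = ⊥

/-- `IsStarAt q X S c`: `S` is a star on the surface with affine cone `X`,
centered at the point `c`, i.e. a set of `q+1` distinct lines on the surface
all passing through `c`. -/
def IsStarAt {k : Type*} [Field k] (q : ℕ) (X : Set (Fin 4 → k))
    (S : Set (Submodule k (Fin 4 → k))) (c : Submodule k (Fin 4 → k)) : Prop :=
  IsPoint c ∧ S.ncard = q + 1 ∧ ∀ L ∈ S, IsLineOn X L ∧ c ≤ L

/-- `S` is a star on the surface with affine cone `X`. -/
def IsStar {k : Type*} [Field k] (q : ℕ) (X : Set (Fin 4 → k))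
    (S : Set (Submodule k (Fin 4 → k))) : Prop :=
  ∃ c, IsStarAt q X S c

/-- `c` is a star point of the surface with affine cone `X`. -/
def IsStarPoint {k : Type*} [Field k] (q : ℕ) (X : Set (Fin 4 → k))
    (c : Submodule k (Fin 4 → k)) : Prop :=
  ∃ S, IsStarAt q X S c

/-- `H` is a star plane of the surface with affine cone `X`, centered at `c`:
the plane section `X ∩ H` is the union of a star centered at `c`. -/
def IsStarPlaneAt {k : Type*} [Field k] (q : ℕ) (X : Set (Fin 4 → k))
    (H c : Submodule k (Fin 4 → k)) : Prop :=
  IsPlane H ∧ ∃ S, IsStarAt q X S c ∧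
    X ∩ (H : Set (Fin 4 → k)) = ⋃ L ∈ S, (L : Set (Fin 4 → k))

/-- An element of `Aut(X)`: since every projective linear automorphism of
ℙ³(k) is represented by an invertible linear map of `k⁴` (uniquely up to
scalars, which act trivially on subspaces and preserve every cone), `g ∈
PGL(4,k)` with `g(X) = X` corresponds to a linear automorphism of `k⁴`
mapping the affine cone `X` onto itself. -/
def PreservesCone {k : Type*} [Field k] (X : Set (Fin 4 → k))
    (g : (Fin 4 → k) ≃ₗ[k] (Fin 4 → k)) : Prop :=
  (⇑g) '' X = X

/-- A double `2d`: a pair of sets `𝒜`, `ℬ`, each consisting of `2d` lines in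
ℙ³(k), such that the lines within `𝒜` are pairwise skew, the lines within `ℬ`
are pairwise skew, each line of `𝒜` meets exactly `d+2` lines of `ℬ`, and
each line of `ℬ` meets exactly `d+2` lines of `𝒜`. -/
def IsDoubleTwoD {k : Type*} [Field k] (d : ℕ)
    (𝒜 ℬ : Set (Submodule k (Fin 4 → k))) : Prop :=
  𝒜.ncard = 2 * d ∧ ℬ.ncard = 2 * d ∧
  (∀ L ∈ 𝒜, IsLine L) ∧ (∀ L ∈ ℬ, IsLine L) ∧
  (∀ L ∈ 𝒜, ∀ M ∈ 𝒜, L ≠ M → SkewLine L M) ∧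
  (∀ L ∈ ℬ, ∀ M ∈ ℬ, L ≠ M → SkewLine L M) ∧
  (∀ L ∈ 𝒜, {M ∈ ℬ | MeetsLine L M}.ncard = d + 2) ∧
  (∀ M ∈ ℬ, {L ∈ 𝒜 | MeetsLine L M}.ncard = d + 2)

/-- A quadric configuration on the surface with affine cone `X` (of degree
`d`): a set of `2d` lines on the surface that is the union of two sets of `d`
pairwise skew lines such that every line of either set meets every line of
the other set. -/
def IsQuadricConfig {k : Type*} [Field k] (d : ℕ) (X : Set (Fin 4 → k))
    (S : Set (Submodule k (Fin 4 → k))) : Prop :=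
  S.ncard = 2 * d ∧ (∀ L ∈ S, IsLineOn X L) ∧
  ∃ ℒ ℳ : Set (Submodule k (Fin 4 → k)),
    S = ℒ ∪ ℳ ∧ ℒ.ncard = d ∧ ℳ.ncard = d ∧
    (∀ L ∈ ℒ, ∀ M ∈ ℒ, L ≠ M → SkewLine L M) ∧
    (∀ L ∈ ℳ, ∀ M ∈ ℳ, L ≠ M → SkewLine L M) ∧
    (∀ L ∈ ℒ, ∀ M ∈ ℳ, MeetsLine L M)

section Comb
open Classical Finset

/-- Combinatorial data abstracted from the geometry. -/
structure CombData {α β : Type*} (d : ℕ) (A : Finset α) (B : Finset β) (R : α → β → Prop) : Prop where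
  cA : #A = 2 * d
  cB : #B = 2 * d
  dA : ∀ a ∈ A, #{b ∈ B | R a b} = d + 2
  dB : ∀ b ∈ B, #{a ∈ A | R a b} = d + 2
  kA : ∀ S ⊆ A, #S = 3 → #{b ∈ B | ∀ a ∈ S, R a b} ≤ d
  kB : ∀ T ⊆ B, #T = 3 → #{a ∈ A | ∀ b ∈ T, R a b} ≤ d
  k2 : ∀ S ⊆ A, ∀ T ⊆ B, #S = 3 → #T = 3 → (∀ a ∈ S, ∀ b ∈ T, R a b) →
    ∀ a ∈ A, ∀ b ∈ B, (∀ b' ∈ T, R a b') → (∀ a' ∈ S, R a' b) → R a b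

/-- Edge count from `T` to the complement of `S`. -/
theorem edge_count {α β : Type*} {d : ℕ} {A : Finset α} {B : Finset β} {R : α → β → Prop}
    (cA : #A = 2 * d) (dB : ∀ b ∈ B, #{a ∈ A | R a b} = d + 2)
    {S : Finset α} {T : Finset β} (hS : S ⊆ A) (hT : T ⊆ B)
    (hST : ∀ a ∈ S, ∀ b ∈ T, R a b)
    (h2 : ∀ a ∈ A, a ∉ S → #{b ∈ T | R a b} ≤ 2) :
    #T * (d + 2 - #S) ≤ 2 * (2 * d - #S) := by
  have h1 := sum_card_bipartiteAbove_eq_sum_card_bipartiteBelow (s := A \ S) (t := T) R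
  simp only [bipartiteAbove, bipartiteBelow] at h1
  have h3 : ∑ a ∈ A \ S, #{b ∈ T | R a b} ≤ #(A \ S) * 2 := by
    apply sum_le_card_nsmul
    intro a ha
    rw [mem_sdiff] at ha
    exact h2 a ha.1 ha.2
  have h4 : ∀ b ∈ T, #{a ∈ A \ S | R a b} = d + 2 - #S := by
    intro b hb
    have : {a ∈ A \ S | R a b} = {a ∈ A | R a b} \ S := by
      ext a; simp; tauto
    rw [this, card_sdiff_of_subset, dB b (hT hb)]
    intro a ha
    simp [hS ha, hST a ha b hb]
  rw [sum_const_nat h4] at h1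
  rw [card_sdiff_of_subset hS, cA] at h3
  omega

theorem block_arith {d s t : ℕ} (hs : 3 ≤ s) (ht : 3 ≤ t) (hsd : s ≤ d) (htd : t ≤ d)
    (e1 : t * (d + 2 - s) ≤ 2 * (2 * d - s)) (e2 : s * (d + 2 - t) ≤ 2 * (2 * d - t))
    (h : d ≤ t ∨ 5 ≤ t) : s = d ∧ t = d := by
  obtain ⟨u, rfl⟩ := Nat.exists_eq_add_of_le hs
  obtain ⟨v, rfl⟩ := Nat.exists_eq_add_of_le ht
  obtain ⟨x, hx⟩ := Nat.exists_eq_add_of_le hsd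
  obtain ⟨y, hy⟩ := Nat.exists_eq_add_of_le htd
  rw [show d + 2 - (3 + u) = x + 2 by omega, show 2 * d - (3 + u) = 3 + u + 2 * x by omega] at e1
  rw [show d + 2 - (3 + v) = y + 2 by omega, show 2 * d - (3 + v) = 3 + v + 2 * y by omega] at e2
  have e3 : u + x = v + y := by omega
  have e4 : x * (v + 1) ≤ 2 * y := by linarith
  have e5 : y * (u + 1) ≤ 2 * x := by linarith
  suffices x = 0 ∧ y = 0 by omega
  rcases h with h | h
  · have hy0 : y = 0 := by omega
    subst hy0
    refine ⟨?_, rfl⟩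
    have h1 : x * 1 ≤ x * (v + 1) := Nat.mul_le_mul_left _ (by omega)
    omega
  · have h1 : x * 3 ≤ x * (v + 1) := Nat.mul_le_mul_left _ (by omega)
    have hy0 : y = 0 := by
      by_contra hne
      have h2 : y * 4 ≤ y * (u + 1) := Nat.mul_le_mul_left _ (by omega)
      omega
    constructor <;> omega

theorem CombData.block {α β : Type*} {d : ℕ} {A : Finset α} {B : Finset β} {R : α → β → Prop}
    (H : CombData d A B R) (hd : 3 ≤ d) (S₀ : Finset α) (hS₀ : S₀ ⊆ A) (c : #S₀ = 3)
    (h : d ≤ #{b ∈ B | ∀ a ∈ S₀, R a b} ∨ 5 ≤ #{b ∈ B | ∀ a ∈ S₀, R a b}) :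
    ∃ S ⊆ A, ∃ T ⊆ B, #S = d ∧ #T = d ∧ (∀ a ∈ S, ∀ b ∈ T, R a b) ∧
      (∀ a ∈ A \ S, ∀ b ∈ B \ T, R a b) := by
  set T : Finset β := {b ∈ B | ∀ a ∈ S₀, R a b} with hTdef
  have hT : T ⊆ B := filter_subset _ _
  have hTd : #T ≤ d := H.kA S₀ hS₀ c
  have hT3 : 3 ≤ #T := by omega
  obtain ⟨T₀, hT₀, cT₀⟩ := exists_subset_card_eq hT3
  set S : Finset α := {a ∈ A | ∀ b ∈ T₀, R a b} with hSdef
  have hS : S ⊆ A := filter_subset _ _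
  have hSd : #S ≤ d := H.kB T₀ (hT₀.trans hT) cT₀
  have h00 : ∀ a ∈ S₀, ∀ b ∈ T₀, R a b := by
    intro a ha b hb
    exact (mem_filter.1 (hT₀ hb)).2 a ha
  have hS0S : S₀ ⊆ S := by
    intro a ha
    exact mem_filter.2 ⟨hS₀ ha, h00 a ha⟩
  have hS3 : 3 ≤ #S := c ▸ card_le_card hS0S
  have hST : ∀ a ∈ S, ∀ b ∈ T, R a b := by
    intro a ha b hb
    have ha := mem_filter.1 ha
    have hb := mem_filter.1 hb
    exact H.k2 S₀ hS₀ T₀ (hT₀.trans hT) c cT₀ h00 a ha.1 b hb.1 ha.2 hb.2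
  have hA2 : ∀ a ∈ A, a ∉ S → #{b ∈ T | R a b} ≤ 2 := by
    intro a ha haS
    by_contra hcon
    obtain ⟨T₁, hT₁, cT₁⟩ := exists_subset_card_eq (show 3 ≤ #{b ∈ T | R a b} by omega)
    apply haS
    refine mem_filter.2 ⟨ha, fun b hb => ?_⟩
    refine H.k2 S₀ hS₀ T₁ ((hT₁.trans (filter_subset _ _)).trans hT) c cT₁ ?_ a ha b (hT (hT₀ hb)) ?_ ?_
    · intro a' ha' b' hb'
      exact hST a' (hS0S ha') b' (mem_filter.1 (hT₁ hb')).1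
    · intro b' hb'
      exact (mem_filter.1 (hT₁ hb')).2
    · intro a' ha'
      exact h00 a' ha' b hb
  have hB2 : ∀ b ∈ B, b ∉ T → #{a ∈ S | R a b} ≤ 2 := by
    intro b hb hbT
    by_contra hcon
    obtain ⟨S₁, hS₁, cS₁⟩ := exists_subset_card_eq (show 3 ≤ #{a ∈ S | R a b} by omega)
    apply hbT
    refine mem_filter.2 ⟨hb, fun a ha => ?_⟩
    refine H.k2 S₁ ((hS₁.trans (filter_subset _ _)).trans hS) T₀ (hT₀.trans hT) cS₁ cT₀ ?_ a (hS₀ ha) b hb ?_ ?_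
    · intro a' ha' b' hb'
      exact hST a' (mem_filter.1 (hS₁ ha')).1 b' (hT₀ hb')
    · intro b' hb'
      exact h00 a ha b' hb'
    · intro a' ha'
      exact (mem_filter.1 (hS₁ ha')).2
  have e1 := edge_count H.cA H.dB hS hT hST hA2
  have e2 := edge_count (R := fun b a => R a b) H.cB H.dA hT hS (fun b hb a ha => hST a ha b hb) hB2
  have hfin : #S = d ∧ #T = d := block_arith hS3 hT3 hSd hTd e1 e2 h
  obtain ⟨hSc, hTc⟩ := hfin
  refine ⟨S, hS, T, hT, hSc, hTc, hST, ?_⟩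
  -- the complementary pair is complete
  have hlow : ∀ b ∈ B \ T, d ≤ #{a ∈ A \ S | R a b} := by
    intro b hb
    rw [mem_sdiff] at hb
    have h1 := H.dB b hb.1
    have h2 := hB2 b hb.1 hb.2
    have h3 : #{a ∈ A | R a b} ≤ #{a ∈ A \ S | R a b} + #{a ∈ S | R a b} := by
      refine (card_le_card ?_).trans (card_union_le _ _)
      intro a ha
      simp only [mem_filter, mem_union, mem_sdiff] at *
      tauto
    omega
  intro a ha b hb
  have h1 := hlow b hb
  have h2 : #(A \ S) = d := by
    rw [card_sdiff_of_subset hS, H.cA, hSc]; omega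
  have h3 : {a ∈ A \ S | R a b} = A \ S :=
    eq_of_subset_of_card_le (filter_subset _ _) (by omega)
  rw [← h3] at ha
  exact (mem_filter.1 ha).2

theorem CombData.triple_large {α β : Type*} {d : ℕ} {A : Finset α} {B : Finset β}
    {R : α → β → Prop} (H : CombData d A B R) (hd : 10 < d) :
    ∃ S₀ ⊆ A, #S₀ = 3 ∧ 5 ≤ #{b ∈ B | ∀ a ∈ S₀, R a b} := by
  by_contra hcon
  push Not at hcon
  have h1 := sum_card_bipartiteAbove_eq_sum_card_bipartiteBelow (s := A.powersetCard 3) (t := B)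
    (fun S b => ∀ a ∈ S, R a b)
  simp only [bipartiteAbove, bipartiteBelow] at h1
  have h2 : ∑ S ∈ A.powersetCard 3, #{b ∈ B | ∀ a ∈ S, R a b} ≤ #(A.powersetCard 3) * 4 := by
    apply sum_le_card_nsmul
    intro S hS
    rw [mem_powersetCard] at hS
    have := hcon S hS.1 hS.2
    omega
  have h3 : ∀ b ∈ B, #{S ∈ A.powersetCard 3 | ∀ a ∈ S, R a b} = (d + 2).choose 3 := by
    intro b hb
    rw [← H.dB b hb, ← card_powersetCard]
    congr 1
    ext S
    simp only [mem_filter, mem_powersetCard, subset_iff]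
    grind
  rw [sum_const_nat h3] at h1
  rw [card_powersetCard, H.cA] at h2
  rw [H.cB] at h1
  obtain ⟨m, rfl⟩ := Nat.exists_eq_add_of_le (show 11 ≤ d by omega)
  have c1 : 6 * (11 + m + 2).choose 3 = (m + 13) * (m + 12) * (m + 11) := by
    have := Nat.descFactorial_eq_factorial_mul_choose (11 + m + 2) 3
    simp [Nat.descFactorial_succ, Nat.factorial] at this
    rw [← this]
    ring
  have c2 : 6 * (2 * (11 + m)).choose 3 = (2 * m + 22) * (2 * m + 21) * (2 * m + 20) := by
    have := Nat.descFactorial_eq_factorial_mul_choose (2 * (11 + m)) 3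
    simp [Nat.descFactorial_succ, Nat.factorial] at this
    rw [← this, show 2 * (11 + m) - 2 = 2 * m + 20 by omega,
      show 2 * (11 + m) - 1 = 2 * m + 21 by omega]
    ring
  have c3 : 2 * (11 + m) * (6 * (11 + m + 2).choose 3) ≤ 6 * (2 * (11 + m)).choose 3 * 4 := by
    nlinarith
  rw [c1, c2] at c3
  nlinarith [sq_nonneg m, mul_nonneg (Nat.zero_le m) (Nat.zero_le (m*m))]

theorem CombData.triple_small {α β : Type*} {d : ℕ} {A : Finset α} {B : Finset β}
    {R : α → β → Prop} (H : CombData d A B R) (hd3 : 3 ≤ d) (hd : d < 5) :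
    ∃ S₀ ⊆ A, #S₀ = 3 ∧ d ≤ #{b ∈ B | ∀ a ∈ S₀, R a b} := by
  -- it is enough to find a triple missing at most `d` lines
  have key : ∀ S₀ ⊆ A, ∀ M : Finset β, #M ≤ d → (∀ a ∈ S₀, {b ∈ B | ¬ R a b} ⊆ M) →
      d ≤ #{b ∈ B | ∀ a ∈ S₀, R a b} := by
    intro S₀ hS₀ M hM h
    have : B \ M ⊆ {b ∈ B | ∀ a ∈ S₀, R a b} := by
      intro b hb
      rw [mem_sdiff] at hb
      refine mem_filter.2 ⟨hb.1, fun a ha => ?_⟩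
      by_contra hR
      exact hb.2 (h a ha (mem_filter.2 ⟨hb.1, hR⟩))
    have h1 := card_le_card this
    have h2 := le_card_sdiff M B
    have h3 := H.cB
    omega
  have mA : ∀ a ∈ A, #{b ∈ B | ¬ R a b} = d - 2 := by
    intro a ha
    have h1 := H.dA a ha
    have h2 := card_filter_add_card_filter_not (s := B) (fun b => R a b)
    have h3 := H.cB
    omega
  have mB : ∀ b ∈ B, #{a ∈ A | ¬ R a b} = d - 2 := by
    intro b hb
    have h1 := H.dB b hb
    have h2 := card_filter_add_card_filter_not (s := A) (fun a => R a b)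
    have h3 := H.cA
    omega
  have cA := H.cA
  interval_cases d
  · obtain ⟨S₀, hS₀, c⟩ := exists_subset_card_eq (show 3 ≤ #A by omega)
    refine ⟨S₀, hS₀, c, key S₀ hS₀ (S₀.biUnion fun a => {b ∈ B | ¬ R a b}) ?_ ?_⟩
    · refine (card_biUnion_le_card_mul _ _ 1 ?_).trans (by omega)
      intro a ha
      exact (mA a (hS₀ ha)).le
    · intro a ha
      exact subset_biUnion_of_mem (fun a => {b ∈ B | ¬ R a b}) ha
  · obtain ⟨a₁, ha₁⟩ : A.Nonempty := card_pos.1 (by omega)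
    obtain ⟨b, b', hbb, hb⟩ := card_eq_two.1 (mA a₁ ha₁)
    have hbm : b ∈ B ∧ ¬ R a₁ b := by
      have : b ∈ ({b ∈ B | ¬ R a₁ b}) := by rw [hb]; simp
      simpa using this
    have hbm' : b' ∈ B ∧ ¬ R a₁ b' := by
      have : b' ∈ ({b ∈ B | ¬ R a₁ b}) := by rw [hb]; simp
      simpa using this
    have other : ∀ c ∈ B, ¬ R a₁ c → ∃ a ∈ A, a ≠ a₁ ∧ ¬ R a c := by
      intro c hc hR
      obtain ⟨a, ha, hne⟩ := exists_mem_ne (show 1 < #{a ∈ A | ¬ R a c} by rw [mB c hc]; norm_num) a₁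
      rw [mem_filter] at ha
      exact ⟨a, ha.1, hne, ha.2⟩
    obtain ⟨a₂, ha₂, hne₂, hR₂⟩ := other b hbm.1 hbm.2
    obtain ⟨a₃, ha₃, hne₃, hR₃⟩ := other b' hbm'.1 hbm'.2
    by_cases h23 : a₂ = a₃
    · subst h23
      obtain ⟨a, ha, hna⟩ : ∃ a ∈ A, a ∉ ({a₁, a₂} : Finset α) := by
        apply exists_mem_notMem_of_card_lt_card
        have := card_le_two (a := a₁) (b := a₂)
        omega
      simp only [mem_insert, mem_singleton, not_or] at hna
      have e2 : ({b, b'} : Finset β) = {c ∈ B | ¬ R a₂ c} := by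
        apply eq_of_subset_of_card_le
        · intro c hc
          simp only [mem_insert, mem_singleton] at hc
          rcases hc with rfl | rfl
          · exact mem_filter.2 ⟨hbm.1, hR₂⟩
          · exact mem_filter.2 ⟨hbm'.1, hR₃⟩
        · rw [mA a₂ ha₂, card_pair hbb]
      have hsub : ({a₁, a₂, a} : Finset α) ⊆ A := by
        simp [insert_subset_iff, ha₁, ha₂, ha]
      refine ⟨{a₁, a₂, a}, hsub, by grind, key _ hsub ({b, b'} ∪ {c ∈ B | ¬ R a c}) ?_ ?_⟩
      · refine (card_union_le _ _).trans ?_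
        rw [mA a ha, card_pair hbb]
      · intro x hx
        simp only [mem_insert, mem_singleton] at hx
        rcases hx with rfl | rfl | rfl
        · rw [hb]; exact subset_union_left
        · rw [e2]; exact subset_union_left
        · exact subset_union_right
    · have hsub : ({a₁, a₂, a₃} : Finset α) ⊆ A := by
        simp [insert_subset_iff, ha₁, ha₂, ha₃]
      have cut : ∀ a ∈ A, ∀ c ∈ B, ¬ R a c → #({c ∈ B | ¬ R a c} \ {c}) = 1 := by
        intro a ha c hc hR
        rw [card_sdiff_of_subset (by simp [hc, hR]), mA a ha]
        simp
      refine ⟨{a₁, a₂, a₃}, hsub, by grind, key _ hsub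
        ({b, b'} ∪ (({c ∈ B | ¬ R a₂ c} \ {b}) ∪ ({c ∈ B | ¬ R a₃ c} \ {b'}))) ?_ ?_⟩
      · refine (card_union_le _ _).trans ?_
        have := card_union_le ({c ∈ B | ¬ R a₂ c} \ {b}) ({c ∈ B | ¬ R a₃ c} \ {b'})
        rw [cut a₂ ha₂ b hbm.1 hR₂, cut a₃ ha₃ b' hbm'.1 hR₃] at this
        rw [card_pair hbb]
        omega
      · intro x hx
        simp only [mem_insert, mem_singleton] at hx
        rcases hx with rfl | rfl | rfl
        · rw [hb]; exact subset_union_left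
        · intro c hc
          simp only [mem_union, mem_sdiff, mem_insert, mem_singleton]
          tauto
        · intro c hc
          simp only [mem_union, mem_sdiff, mem_insert, mem_singleton]
          tauto

theorem CombData.main {α β : Type*} {d : ℕ} {A : Finset α} {B : Finset β}
    {R : α → β → Prop} (H : CombData d A B R) (hd3 : 3 ≤ d) (hd : 10 < d ∨ d < 5) :
    ∃ S ⊆ A, ∃ T ⊆ B, #S = d ∧ #T = d ∧ (∀ a ∈ S, ∀ b ∈ T, R a b) ∧
      (∀ a ∈ A \ S, ∀ b ∈ B \ T, R a b) := by
  rcases hd with hd | hd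
  · obtain ⟨S₀, h, c, h5⟩ := H.triple_large hd
    exact H.block hd3 S₀ h c (Or.inr h5)
  · obtain ⟨S₀, h, c, h5⟩ := H.triple_small hd3 hd
    exact H.block hd3 S₀ h c (Or.inl h5)

end Comb

section Geom
open Polynomial

/-- The sesquilinear form attached to `A`. -/
def sesq {k : Type*} [Field k] (q : ℕ) (A : Matrix (Fin 4) (Fin 4) k)
    (x y : Fin 4 → k) : k :=
  ∑ i, ∑ j, A i j * x i ^ q * y j

section
variable {k : Type*} [Field k] {q : ℕ} {A : Matrix (Fin 4) (Fin 4) k}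

theorem sesq_add_right (x y z : Fin 4 → k) : sesq q A x (y + z) = sesq q A x y + sesq q A x z := by
  simp only [sesq, Pi.add_apply, mul_add, Finset.sum_add_distrib]

theorem sesq_smul_right (c : k) (x y : Fin 4 → k) : sesq q A x (c • y) = c * sesq q A x y := by
  simp only [sesq, Pi.smul_apply, smul_eq_mul, Finset.mul_sum]
  exact Finset.sum_congr rfl fun i _ => Finset.sum_congr rfl fun j _ => by ring

theorem sesq_add_left {p e : ℕ} (hp : p.Prime) (hchar : CharP k p) (hq : q = p ^ e)
    (x y z : Fin 4 → k) : sesq q A (x + y) z = sesq q A x z + sesq q A y z := by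
  have := Fact.mk hp
  simp only [sesq, Pi.add_apply, hq, add_pow_char_pow, ← Finset.sum_add_distrib]
  exact Finset.sum_congr rfl fun i _ => Finset.sum_congr rfl fun j _ => by ring

theorem sesq_smul_left (c : k) (x y : Fin 4 → k) : sesq q A (c • x) y = c ^ q * sesq q A x y := by
  simp only [sesq, Pi.smul_apply, smul_eq_mul, Finset.mul_sum, mul_pow]
  exact Finset.sum_congr rfl fun i _ => Finset.sum_congr rfl fun j _ => by ring

theorem sesq_nondeg (hq : q ≠ 0) (hA : IsUnit A) (x : Fin 4 → k)
    (h : ∀ y, sesq q A x y = 0) : x = 0 := by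
  have h1 : Matrix.vecMul (fun i => x i ^ q) A = 0 := by
    ext j
    have := h (Pi.single j 1)
    simp only [sesq, Pi.single_apply, mul_ite, mul_one, mul_zero, Finset.sum_ite_eq',
      Finset.mem_univ, if_true] at this
    simp only [Matrix.vecMul, dotProduct, Pi.zero_apply]
    rw [← this]
    exact Finset.sum_congr rfl fun i _ => by ring
  have h2 : (fun i => x i ^ q) = 0 := by
    apply Matrix.vecMul_injective_of_isUnit hA
    simpa using h1
  ext i
  have := congrFun h2 i
  exact pow_eq_zero_iff hq |>.1 this

theorem exists_pow_ne [Infinite k] (hq : 2 ≤ q) : ∃ t : k, t ^ q ≠ t := by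
  by_contra h
  push Not at h
  have h0 : (X ^ q - X : k[X]) = 0 := by
    apply Polynomial.funext
    intro t
    simp [h t]
  have := FiniteField.X_pow_card_sub_X_ne_zero k (show 1 < q by omega)
  exact this h0

/-- A line on the surface is totally isotropic. -/
theorem isotropic [Infinite k] {p e : ℕ} (hp : p.Prime) (hchar : CharP k p) (hq : q = p ^ e)
    (hq2 : 2 ≤ q) {L : Submodule k (Fin 4 → k)} (hL : (L : Set (Fin 4 → k)) ⊆ extremalCone k q A)
    {x y : Fin 4 → k} (hx : x ∈ L) (hy : y ∈ L) : sesq q A x y = 0 := by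
  have h0 : ∀ z ∈ L, sesq q A z z = 0 := fun z hz => hL hz
  have h1 : ∀ t : k, t * sesq q A x y + t ^ q * sesq q A y x = 0 := by
    intro t
    have := h0 (x + t • y) (L.add_mem hx (L.smul_mem t hy))
    rw [sesq_add_left hp hchar hq, sesq_add_right, sesq_add_right, sesq_smul_left, sesq_smul_left,
      sesq_smul_right, sesq_smul_right, h0 x hx, h0 y hy] at this
    linear_combination this
  obtain ⟨t, ht⟩ := exists_pow_ne (k := k) hq2
  have h2 := h1 1
  have h3 := h1 t
  have h4 : (t ^ q - t) * sesq q A x y = 0 := by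
    rw [one_pow] at h2
    linear_combination t ^ q * h2 - h3
  rcases mul_eq_zero.1 h4 with h | h
  · exact absurd (sub_eq_zero.1 h) ht
  · exact h

/-- The shear attached to two skew lines. -/
theorem exists_shear {L₂ L₃ : Submodule k (Fin 4 → k)} (h2 : IsLine L₂) (h3 : IsLine L₃)
    (h : SkewLine L₂ L₃) : ∃ φ : (Fin 4 → k) →ₗ[k] (Fin 4 → k),
      (∀ x, φ x ∈ L₂) ∧ ∀ x, x + φ x ∈ L₃ := by
  have hc : IsCompl L₂ L₃ := by
    refine ⟨disjoint_iff.2 h, codisjoint_iff.2 ?_⟩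
    apply Submodule.eq_top_of_finrank_eq
    have := Submodule.finrank_sup_add_finrank_inf_eq L₂ L₃
    rw [show L₂ ⊓ L₃ = ⊥ from h, finrank_bot, h2, h3] at this
    simp; omega
  refine ⟨-L₂.projection L₃ hc, fun x => ?_, fun x => ?_⟩
  · simpa using Submodule.projection_apply_mem hc x
  · simpa [sub_eq_add_neg] using Submodule.sub_projection_mem hc x

theorem mem_zero_of_skew {L M : Submodule k (Fin 4 → k)} (h : SkewLine L M) {x : Fin 4 → k}
    (hx : x ∈ L) (hy : x ∈ M) : x = 0 := by
  have : x ∈ L ⊓ M := ⟨hx, hy⟩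
  rw [show L ⊓ M = ⊥ from h] at this
  simpa using this

/-- A line is spanned by any two nonzero vectors from skew lines. -/
theorem line_span {M L₁ L₂ : Submodule k (Fin 4 → k)} (hM : IsLine M) (h12 : SkewLine L₁ L₂)
    {v w : Fin 4 → k} (hv : v ∈ L₁) (hw : w ∈ L₂) (hv0 : v ≠ 0) (hw0 : w ≠ 0)
    (hvM : v ∈ M) (hwM : w ∈ M) {u : Fin 4 → k} (hu : u ∈ M) : ∃ a b : k, u = a • v + b • w := by
  have li : LinearIndependent k ![v, w] := by
    rw [LinearIndependent.pair_iff' hv0]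
    intro a ha
    exact hw0 (mem_zero_of_skew h12 (ha ▸ L₁.smul_mem a hv) hw)
  have hspan : Submodule.span k (Set.range ![v, w]) = M := by
    apply Submodule.eq_of_le_of_finrank_eq
    · rw [Submodule.span_le]
      rintro _ ⟨i, rfl⟩
      fin_cases i <;> simpa
    · rw [finrank_span_eq_card li, hM]; simp
  rw [← hspan] at hu
  simp only [Matrix.range_cons, Matrix.range_empty, Set.union_empty, Set.singleton_union] at hu
  obtain ⟨a, b, h⟩ := Submodule.mem_span_pair.1 hu
  exact ⟨a, b, h.symm⟩

theorem exists_ne_of_meets {L M : Submodule k (Fin 4 → k)} (h : MeetsLine L M) :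
    ∃ x ∈ L, x ∈ M ∧ x ≠ 0 := by
  obtain ⟨x, hx, h0⟩ := Submodule.exists_mem_ne_zero_of_ne_bot h
  exact ⟨x, hx.1, hx.2, h0⟩

theorem meets_of_mem {L M : Submodule k (Fin 4 → k)} {x : Fin 4 → k} (h1 : x ∈ L) (h2 : x ∈ M)
    (h0 : x ≠ 0) : MeetsLine L M := by
  intro h
  exact h0 (mem_zero_of_skew h h1 h2)

/-- Description of the transversals of three skew lines. -/
theorem transversal {L₁ L₂ L₃ M : Submodule k (Fin 4 → k)} (hM : IsLine M)
    (h12 : SkewLine L₁ L₂) (h23 : SkewLine L₂ L₃)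
    {φ : (Fin 4 → k) →ₗ[k] (Fin 4 → k)} (f2 : ∀ x, φ x ∈ L₂) (f3 : ∀ x, x + φ x ∈ L₃)
    (m1 : MeetsLine L₁ M) (m2 : MeetsLine L₂ M) (m3 : MeetsLine L₃ M) :
    ∃ v ∈ L₁, v ≠ 0 ∧ v ∈ M ∧ φ v ∈ M := by
  obtain ⟨v, hv, hvM, hv0⟩ := exists_ne_of_meets m1
  obtain ⟨w, hw, hwM, hw0⟩ := exists_ne_of_meets m2
  obtain ⟨u, hu, huM, hu0⟩ := exists_ne_of_meets m3
  obtain ⟨a, b, rfl⟩ := line_span hM h12 hv hw hv0 hw0 hvM hwM huM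
  have h1 : b • w - a • φ v = 0 := by
    apply mem_zero_of_skew h23
    · exact L₂.sub_mem (L₂.smul_mem _ hw) (L₂.smul_mem _ (f2 v))
    · have := L₃.sub_mem hu (L₃.smul_mem a (f3 v))
      convert this using 1
      module
  have ha : a ≠ 0 := by
    rintro rfl
    apply hu0
    apply mem_zero_of_skew h23 _ hu
    simpa using L₂.smul_mem b hw
  refine ⟨v, hv, hv0, hvM, ?_⟩
  have : φ v = a⁻¹ • (b • w) := by
    rw [sub_eq_zero.1 h1, smul_smul, inv_mul_cancel₀ ha, one_smul]
  rw [this]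
  exact M.smul_mem _ (M.smul_mem _ hwM)

theorem shear_inj {L₁ L₃ : Submodule k (Fin 4 → k)} (h13 : SkewLine L₁ L₃)
    {φ : (Fin 4 → k) →ₗ[k] (Fin 4 → k)} (f3 : ∀ x, x + φ x ∈ L₃)
    {v : Fin 4 → k} (hv : v ∈ L₁) (h : φ v = 0) : v = 0 := by
  apply mem_zero_of_skew h13 hv
  simpa [h] using f3 v

/-- Two distinct transversals are skew. -/
theorem transversal_eq {L₁ L₂ L₃ M M' : Submodule k (Fin 4 → k)} (hM : IsLine M) (hM' : IsLine M')
    (h12 : SkewLine L₁ L₂) (h13 : SkewLine L₁ L₃)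
    {φ : (Fin 4 → k) →ₗ[k] (Fin 4 → k)} (f2 : ∀ x, φ x ∈ L₂) (f3 : ∀ x, x + φ x ∈ L₃)
    {v : Fin 4 → k} (hv : v ∈ L₁) (hv0 : v ≠ 0) (h1 : v ∈ M) (h2 : φ v ∈ M)
    (h1' : v ∈ M') (h2' : φ v ∈ M') : M = M' := by
  have hφ : φ v ≠ 0 := fun h => hv0 (shear_inj h13 f3 hv h)
  apply Submodule.eq_of_le_of_finrank_eq
  · intro u hu
    obtain ⟨a, b, rfl⟩ := line_span hM h12 hv (f2 v) hv0 hφ h1 h2 hu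
    exact M'.add_mem (M'.smul_mem _ h1') (M'.smul_mem _ h2')
  · rw [hM', show finrank k M = 2 from hM]

/-- In a two dimensional space, independent vectors span. -/
theorem pair_span {L : Submodule k (Fin 4 → k)} (hL : IsLine L) {v w : Fin 4 → k}
    (hv : v ∈ L) (hw : w ∈ L) (li : LinearIndependent k ![v, w]) {u : Fin 4 → k} (hu : u ∈ L) :
    ∃ a b : k, u = a • v + b • w := by
  have hspan : Submodule.span k (Set.range ![v, w]) = L := by
    apply Submodule.eq_of_le_of_finrank_eq
    · rw [Submodule.span_le]
      rintro _ ⟨i, rfl⟩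
      fin_cases i <;> simpa
    · rw [finrank_span_eq_card li, hL]; simp
  rw [← hspan] at hu
  simp only [Matrix.range_cons, Matrix.range_empty, Set.union_empty, Set.singleton_union] at hu
  obtain ⟨a, b, h⟩ := Submodule.mem_span_pair.1 hu
  exact ⟨a, b, h.symm⟩

/-- `K2`: a line meeting three transversals meets every transversal. -/
theorem regulus {L₁ L₂ L₃ M₁ M₂ M₃ M N : Submodule k (Fin 4 → k)}
    (l1 : IsLine L₁) (l2 : IsLine L₂) (l3 : IsLine L₃)
    (h12 : SkewLine L₁ L₂) (h13 : SkewLine L₁ L₃) (h23 : SkewLine L₂ L₃)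
    (m1 : IsLine M₁) (m2 : IsLine M₂) (m3 : IsLine M₃) (m : IsLine M)
    (g12 : SkewLine M₁ M₂) (g13 : SkewLine M₁ M₃) (g23 : SkewLine M₂ M₃)
    (n : IsLine N)
    (a11 : MeetsLine L₁ M₁) (a12 : MeetsLine L₁ M₂) (a13 : MeetsLine L₁ M₃)
    (a21 : MeetsLine L₂ M₁) (a22 : MeetsLine L₂ M₂) (a23 : MeetsLine L₂ M₃)
    (a31 : MeetsLine L₃ M₁) (a32 : MeetsLine L₃ M₂) (a33 : MeetsLine L₃ M₃)
    (b1 : MeetsLine L₁ M) (b2 : MeetsLine L₂ M) (b3 : MeetsLine L₃ M)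
    (c1 : MeetsLine N M₁) (c2 : MeetsLine N M₂) (c3 : MeetsLine N M₃) : MeetsLine N M := by
  obtain ⟨φ, f2, f3⟩ := exists_shear l2 l3 h23
  obtain ⟨v₁, hv₁, z1, p1, r1⟩ := transversal m1 h12 h23 f2 f3 a11 a21 a31
  obtain ⟨v₂, hv₂, z2, p2, r2⟩ := transversal m2 h12 h23 f2 f3 a12 a22 a32
  obtain ⟨v₃, hv₃, z3, p3, r3⟩ := transversal m3 h12 h23 f2 f3 a13 a23 a33
  obtain ⟨v, hv, z, p, r⟩ := transversal m h12 h23 f2 f3 b1 b2 b3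
  have inj : ∀ w ∈ L₁, φ w = 0 → w = 0 := fun w hw h => shear_inj h13 f3 hw h
  have li : LinearIndependent k ![v₁, v₂] := by
    rw [LinearIndependent.pair_iff' z1]
    intro a ha
    exact z2 (mem_zero_of_skew g12 (ha ▸ M₁.smul_mem a p1) p2)
  have li' := LinearIndependent.pair_iff.1 li
  obtain ⟨c, d, hcd⟩ := pair_span l1 hv₁ hv₂ li hv₃
  obtain ⟨s, t, hst⟩ := pair_span l1 hv₁ hv₂ li hv
  have hc : c ≠ 0 := by
    rintro rfl
    apply z3
    apply mem_zero_of_skew g23 _ p3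
    rw [hcd]; simpa using M₂.smul_mem d p2
  have hd : d ≠ 0 := by
    rintro rfl
    apply z3
    apply mem_zero_of_skew g13 _ p3
    rw [hcd]; simpa using M₁.smul_mem c p1
  obtain ⟨n₁, hn₁, q1, y1⟩ := exists_ne_of_meets c1
  obtain ⟨n₂, hn₂, q2, y2⟩ := exists_ne_of_meets c2
  obtain ⟨n₃, hn₃, q3, y3⟩ := exists_ne_of_meets c3
  obtain ⟨x, y, hxy⟩ := line_span n g12 q1 q2 y1 y2 hn₁ hn₂ hn₃
  obtain ⟨α₁, β₁, e1⟩ := line_span m1 h12 hv₁ (f2 v₁) z1 (fun h => z1 (inj _ hv₁ h)) p1 r1 q1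
  obtain ⟨α₂, β₂, e2⟩ := line_span m2 h12 hv₂ (f2 v₂) z2 (fun h => z2 (inj _ hv₂ h)) p2 r2 q2
  obtain ⟨α, β, e3⟩ := line_span m3 h12 hv₃ (f2 v₃) z3 (fun h => z3 (inj _ hv₃ h)) p3 r3 q3
  -- compare the components in `L₁` and `L₂`
  have w1 : (x * α₁ - α * c) • v₁ + (y * α₂ - α * d) • v₂ = 0 ∧
      φ ((x * β₁ - β * c) • v₁ + (y * β₂ - β * d) • v₂) = 0 := by
    have hsum : ((x * α₁ - α * c) • v₁ + (y * α₂ - α * d) • v₂) +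
        φ ((x * β₁ - β * c) • v₁ + (y * β₂ - β * d) • v₂) = 0 := by
      have : n₃ - (x • n₁ + y • n₂) = 0 := by rw [hxy]; simp
      rw [e3, e1, e2, hcd] at this
      simp only [map_add, map_smul] at this ⊢
      rw [← neg_eq_zero, ← this]
      module
    have hm : (x * α₁ - α * c) • v₁ + (y * α₂ - α * d) • v₂ ∈ L₁ :=
      L₁.add_mem (L₁.smul_mem _ hv₁) (L₁.smul_mem _ hv₂)
    have h0 : (x * α₁ - α * c) • v₁ + (y * α₂ - α * d) • v₂ = 0 := by
      apply mem_zero_of_skew h12 hm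
      rw [eq_neg_of_add_eq_zero_left hsum]
      exact L₂.neg_mem (f2 _)
    refine ⟨h0, ?_⟩
    rwa [h0, zero_add] at hsum
  have w2 := inj _ (L₁.add_mem (L₁.smul_mem _ hv₁) (L₁.smul_mem _ hv₂)) w1.2
  obtain ⟨u1, u2⟩ := li' _ _ w1.1
  obtain ⟨u3, u4⟩ := li' _ _ w2
  -- `α w + β φ w` lies in `N` for `w = v₁`, `w = v₂`
  have k1 : α • v₁ + β • φ v₁ ∈ N := by
    have : α • v₁ + β • φ v₁ = (c⁻¹ * x) • n₁ := by
      rw [e1, show α = c⁻¹ * x * α₁ by field_simp; linear_combination -u1,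
        show β = c⁻¹ * x * β₁ by field_simp; linear_combination -u3]
      module
    rw [this]; exact N.smul_mem _ hn₁
  have k2 : α • v₂ + β • φ v₂ ∈ N := by
    have : α • v₂ + β • φ v₂ = (d⁻¹ * y) • n₂ := by
      rw [e2, show α = d⁻¹ * y * α₂ by field_simp; linear_combination -u2,
        show β = d⁻¹ * y * β₂ by field_simp; linear_combination -u4]
      module
    rw [this]; exact N.smul_mem _ hn₂
  have k3 : α • v + β • φ v ∈ N := by
    have : α • v + β • φ v = s • (α • v₁ + β • φ v₁) + t • (α • v₂ + β • φ v₂) := by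
      rw [hst]; simp only [map_add, map_smul]; module
    rw [this]; exact N.add_mem (N.smul_mem _ k1) (N.smul_mem _ k2)
  refine meets_of_mem k3 (M.add_mem (M.smul_mem _ p) (M.smul_mem _ r)) ?_
  intro h0
  have hα : α • v = 0 := by
    apply mem_zero_of_skew h12 (L₁.smul_mem _ hv)
    rw [eq_neg_of_add_eq_zero_left h0]
    exact L₂.neg_mem (L₂.smul_mem _ (f2 v))
  have hα0 : α = 0 := (smul_eq_zero.1 hα).resolve_right z
  rw [hα, zero_add] at h0
  have hβ0 : β = 0 := (smul_eq_zero.1 h0).resolve_right (fun h => z (inj _ hv h))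
  apply y3
  rw [e3, hα0, hβ0]; simp

/-- `K1`: three pairwise skew lines on the surface have at most `q+1` common transversals on it. -/
theorem card_transversals [Infinite k] {p e : ℕ} (hp : p.Prime) (hchar : CharP k p)
    (hq : q = p ^ e) (hq2 : 2 ≤ q) (hA : IsUnit A)
    {L₁ L₂ L₃ : Submodule k (Fin 4 → k)}
    (l1 : IsLineOn (extremalCone k q A) L₁) (l2 : IsLine L₂) (l3 : IsLine L₃)
    (h12 : SkewLine L₁ L₂) (h13 : SkewLine L₁ L₃) (h23 : SkewLine L₂ L₃)
    (T : Finset (Submodule k (Fin 4 → k)))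
    (hT : ∀ M ∈ T, IsLineOn (extremalCone k q A) M ∧ MeetsLine L₁ M ∧ MeetsLine L₂ M ∧
      MeetsLine L₃ M) : T.card ≤ q + 1 := by
  classical
  obtain ⟨φ, f2, f3⟩ := exists_shear l2 l3 h23
  have inj : ∀ w ∈ L₁, φ w = 0 → w = 0 := fun w hw h => shear_inj h13 f3 hw h
  rcases T.eq_empty_or_nonempty with rfl | ⟨M₀, hM₀⟩
  · simp
  have tr : ∀ M ∈ T, ∃ v ∈ L₁, v ≠ 0 ∧ v ∈ M ∧ φ v ∈ M := fun M hM => by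
    obtain ⟨o, t1, t2, t3⟩ := hT M hM
    exact transversal o.1 h12 h23 f2 f3 t1 t2 t3
  have iso : ∀ M ∈ T, ∀ x ∈ M, ∀ y ∈ M, sesq q A x y = 0 := fun M hM x hx y hy =>
    isotropic hp hchar hq hq2 (hT M hM).1.2 hx hy
  obtain ⟨a, ha, za, pa, ra⟩ := tr M₀ hM₀
  -- complete `a` to a basis of `L₁`
  obtain ⟨f, hf, li⟩ : ∃ f ∈ L₁, LinearIndependent k ![a, f] := by
    have hlt : Submodule.span k {a} < L₁ := by
      refine lt_of_le_of_ne ((Submodule.span_singleton_le_iff_mem _ _).2 ha) ?_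
      intro h
      have h1 := finrank_span_singleton (K := k) za
      rw [h, show finrank k L₁ = 2 from l1.1] at h1
      omega
    obtain ⟨f, hf, hnf⟩ := SetLike.exists_of_lt hlt
    refine ⟨f, hf, (LinearIndependent.pair_iff' za).2 ?_⟩
    intro c hc
    exact hnf (Submodule.mem_span_singleton.2 ⟨c, hc⟩)
  -- every other transversal is given by a vector `s a + f`
  have par : ∀ M ∈ T, M ≠ M₀ → ∃ s : k, s • a + f ∈ M ∧ φ (s • a + f) ∈ M := by
    intro M hM hne
    obtain ⟨v, hv, z, pv, r⟩ := tr M hM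
    obtain ⟨x, y, rfl⟩ := pair_span l1.1 ha hf li hv
    have hy : y ≠ 0 := by
      rintro rfl
      simp only [zero_smul, add_zero] at *
      have hx : x ≠ 0 := by rintro rfl; simp at z
      apply hne
      refine transversal_eq (hT M hM).1.1 (hT M₀ hM₀).1.1 h12 h13 f2 f3 hv z pv r
        (M₀.smul_mem _ pa) ?_
      rw [map_smul]; exact M₀.smul_mem _ ra
    have hh : (y⁻¹ * x) • a + f = y⁻¹ • (x • a + y • f) := by
      rw [smul_add, smul_smul, smul_smul, inv_mul_cancel₀ hy, one_smul]
    refine ⟨y⁻¹ * x, ?_, ?_⟩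
    · rw [hh]; exact M.smul_mem _ pv
    · rw [hh, map_smul]; exact M.smul_mem _ r
  choose! s hs1 hs2 using par
  set P : k[X] := C (sesq q A a (φ f)) * X ^ q + C (sesq q A f (φ a)) * X + C (sesq q A f (φ f))
    with hP
  have hroot : ∀ M ∈ T, M ≠ M₀ → P.eval (s M) = 0 := by
    intro M hM hne
    have := iso M hM _ (hs1 M hM hne) _ (hs2 M hM hne)
    have h0 := iso M₀ hM₀ _ pa _ ra
    rw [map_add, map_smul, sesq_add_left hp hchar hq, sesq_add_right, sesq_add_right,
      sesq_smul_left, sesq_smul_left, sesq_smul_right, sesq_smul_right, h0] at this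
    simp only [hP, eval_add, eval_mul, eval_C, eval_pow, eval_X]
    linear_combination this
  have hP0 : P ≠ 0 := by
    intro h
    have hq1 : q ≠ 1 := by omega
    have hq0 : q ≠ 0 := by omega
    have c0 : sesq q A a (φ f) = 0 := by
      have := congrArg (fun Q => coeff Q q) h
      simpa [hP, coeff_X, coeff_C, hq0, hq1, hq1.symm] using this
    apply za
    apply sesq_nondeg hq0 hA
    intro y
    -- `L₁ ⊔ L₂ = ⊤`
    obtain ⟨ψ, g2, g3⟩ := exists_shear l1.1 l2 h12
    have hy : y = (y + ψ y) - ψ y := by simp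
    -- the vector `φ a, φ f` spans `L₂`
    have liφ : LinearIndependent k ![φ a, φ f] := by
      rw [LinearIndependent.pair_iff]
      intro x y hxy
      rw [← map_smul, ← map_smul, ← map_add] at hxy
      exact LinearIndependent.pair_iff.1 li x y
        (inj _ (L₁.add_mem (L₁.smul_mem _ ha) (L₁.smul_mem _ hf)) hxy)
    obtain ⟨x, y', hxy⟩ := pair_span l2 (f2 a) (f2 f) liφ (g3 y)
    have e1 : sesq q A a (y + ψ y) = 0 := by
      rw [hxy, sesq_add_right, sesq_smul_right, sesq_smul_right, c0, iso M₀ hM₀ _ pa _ ra]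
      simp
    have e2 : sesq q A a (ψ y) = 0 := isotropic hp hchar hq hq2 l1.2 ha (g2 y)
    rw [sesq_add_right, e2, add_zero] at e1
    exact e1
  have hdeg : P.natDegree ≤ q := by
    have : 1 ≤ q := by omega
    rw [hP]
    compute_degree!
  have hcard : (T.erase M₀).card ≤ P.roots.toFinset.card := by
    apply Finset.card_le_card_of_injOn s
    · intro M hM
      have hM := Finset.mem_erase.1 hM
      simp only [Finset.mem_coe, Multiset.mem_toFinset, mem_roots hP0]
      exact hroot M hM.2 hM.1
    · intro M hM M' hM' hss
      have hM := Finset.mem_erase.1 hM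
      have hM' := Finset.mem_erase.1 hM'
      refine transversal_eq (v := s M • a + f) (hT M hM.2).1.1 (hT M' hM'.2).1.1 h12 h13 f2 f3
        (L₁.add_mem (L₁.smul_mem _ ha) hf) ?_
        (hs1 M hM.2 hM.1) (hs2 M hM.2 hM.1) ?_ ?_
      · intro h0
        have := LinearIndependent.pair_iff.1 li (s M) 1 (by simpa using h0)
        simp at this
      · rw [hss]; exact hs1 M' hM'.2 hM'.1
      · rw [hss]; exact hs2 M' hM'.2 hM'.1
  have h1 := Multiset.toFinset_card_le P.roots
  have h2 := P.card_roots'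
  rw [Finset.card_erase_of_mem hM₀] at hcard
  omega

end
end Geom

section Glue
open Classical Finset

theorem CombData.uniq {α β : Type*} {d : ℕ} {A : Finset α} {B : Finset β}
    {R : α → β → Prop} (H : CombData d A B R) (hd3 : 3 ≤ d)
    {P P' : Finset α} {Q Q' : Finset β} (hP : P ⊆ A) (hP' : P' ⊆ A) (hQ : Q ⊆ B) (hQ' : Q' ⊆ B)
    (cP : #P = d) (cP' : #P' = d) (cQ : #Q = d) (cQ' : #Q' = d)
    (h : ∀ a ∈ P, ∀ b ∈ Q, R a b) (h' : ∀ a ∈ P', ∀ b ∈ Q', R a b)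
    (h3 : 3 ≤ #(P ∩ P')) : P = P' ∧ Q = Q' := by
  obtain ⟨S, hS, cS⟩ := exists_subset_card_eq h3
  have hSA : S ⊆ A := (hS.trans inter_subset_left).trans hP
  have k := H.kA S hSA cS
  have e1 : Q = {b ∈ B | ∀ a ∈ S, R a b} := by
    apply eq_of_subset_of_card_le
    · intro b hb
      exact mem_filter.2 ⟨hQ hb, fun a ha => h a (mem_inter.1 (hS ha)).1 b hb⟩
    · omega
  have e2 : Q' = {b ∈ B | ∀ a ∈ S, R a b} := by
    apply eq_of_subset_of_card_le
    · intro b hb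
      exact mem_filter.2 ⟨hQ' hb, fun a ha => h' a (mem_inter.1 (hS ha)).2 b hb⟩
    · omega
  have eQ : Q = Q' := e1.trans e2.symm
  refine ⟨?_, eQ⟩
  subst eQ
  obtain ⟨T, hT, cT⟩ := exists_subset_card_eq (show 3 ≤ #Q by omega)
  have k' := H.kB T (hT.trans hQ) cT
  have e3 : P = {a ∈ A | ∀ b ∈ T, R a b} := by
    apply eq_of_subset_of_card_le
    · intro a ha
      exact mem_filter.2 ⟨hP ha, fun b hb => h a ha b (hT hb)⟩
    · omega
  have e4 : P' = {a ∈ A | ∀ b ∈ T, R a b} := by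
    apply eq_of_subset_of_card_le
    · intro a ha
      exact mem_filter.2 ⟨hP' ha, fun b hb => h' a ha b (hT hb)⟩
    · omega
  exact e3.trans e4.symm

theorem meets_comm {k : Type*} [Field k] {L M : Submodule k (Fin 4 → k)} :
    MeetsLine L M ↔ MeetsLine M L := by
  unfold MeetsLine; rw [inf_comm]

theorem skew_comm {k : Type*} [Field k] {L M : Submodule k (Fin 4 → k)} (h : SkewLine L M) :
    SkewLine M L := by
  unfold SkewLine at *; rwa [inf_comm]

theorem config_side {k : Type*} [Field k] {𝒜 ℬ ℒ ℳ : Set (Submodule k (Fin 4 → k))}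
    (sA : ∀ L ∈ 𝒜, ∀ M ∈ 𝒜, L ≠ M → SkewLine L M)
    (sB : ∀ L ∈ ℬ, ∀ M ∈ ℬ, L ≠ M → SkewLine L M)
    (hdis : Disjoint ℒ ℳ) (hL : ℒ ⊆ 𝒜 ∪ ℬ) (hM : ℳ ⊆ 𝒜 ∪ ℬ)
    (hmeet : ∀ L ∈ ℒ, ∀ M ∈ ℳ, MeetsLine L M)
    {L₀ : Submodule k (Fin 4 → k)} (h0 : L₀ ∈ ℒ) (h0A : L₀ ∈ 𝒜) (hne : ℳ.Nonempty) :
    ℒ ⊆ 𝒜 ∧ ℳ ⊆ ℬ := by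
  have h1 : ℳ ⊆ ℬ := by
    intro M hMM
    rcases hM hMM with h | h
    · have : L₀ ≠ M := fun he => Set.disjoint_left.1 hdis h0 (he ▸ hMM)
      exact absurd (sA _ h0A _ h this) (hmeet _ h0 _ hMM)
    · exact h
  refine ⟨?_, h1⟩
  obtain ⟨M, hMM⟩ := hne
  intro L hLL
  rcases hL hLL with h | h
  · exact h
  · have : L ≠ M := fun he => Set.disjoint_left.1 hdis hLL (he ▸ hMM)
    exact absurd (sB _ h _ (h1 hMM) this) (hmeet _ hLL _ hMM)

theorem config_split {k : Type*} [Field k] {d : ℕ} (hd : 1 ≤ d) {X : Set (Fin 4 → k)}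
    {𝒜 ℬ : Finset (Submodule k (Fin 4 → k))} {S : Set (Submodule k (Fin 4 → k))}
    (sA : ∀ L ∈ 𝒜, ∀ M ∈ 𝒜, L ≠ M → SkewLine L M)
    (sB : ∀ L ∈ ℬ, ∀ M ∈ ℬ, L ≠ M → SkewLine L M)
    (hS : S ⊆ 𝒜 ∪ ℬ) (hc : IsQuadricConfig d X S) :
    ∃ P ⊆ 𝒜, ∃ Q ⊆ ℬ, #P = d ∧ #Q = d ∧ (∀ a ∈ P, ∀ b ∈ Q, MeetsLine a b) ∧ S = ↑P ∪ ↑Q := by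
  obtain ⟨cS, -, ℒ, ℳ, rfl, cL, cM, -, -, hm⟩ := hc
  have fL : ℒ.Finite := Set.finite_of_ncard_pos (by omega)
  have fM : ℳ.Finite := Set.finite_of_ncard_pos (by omega)
  have nL : ℒ.Nonempty := Set.nonempty_of_ncard_ne_zero (by omega)
  have nM : ℳ.Nonempty := Set.nonempty_of_ncard_ne_zero (by omega)
  have hdis : Disjoint ℒ ℳ := by
    have := Set.ncard_union_add_ncard_inter ℒ ℳ fL fM
    rw [Set.disjoint_iff_inter_eq_empty, ← Set.ncard_eq_zero (fL.inter_of_left _)]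
    omega
  have hL : ℒ ⊆ ↑𝒜 ∪ ↑ℬ := Set.subset_union_left.trans hS
  have hM : ℳ ⊆ ↑𝒜 ∪ ↑ℬ := Set.subset_union_right.trans hS
  obtain ⟨L₀, h0⟩ := nL
  rcases hL h0 with h | h
  · obtain ⟨h1, h2⟩ := config_side sA sB hdis hL hM hm h0 h nM
    refine ⟨fL.toFinset, by simpa using h1, fM.toFinset, by simpa using h2, ?_, ?_, ?_, by simp⟩
    · rw [← cL, Set.ncard_eq_toFinset_card _ fL]
    · rw [← cM, Set.ncard_eq_toFinset_card _ fM]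
    · simpa using hm
  · obtain ⟨h1, h2⟩ := config_side sB sA hdis (Set.union_comm _ _ ▸ hL) (Set.union_comm _ _ ▸ hM)
      hm h0 h nM
    refine ⟨fM.toFinset, by simpa using h2, fL.toFinset, by simpa using h1, ?_, ?_, ?_, ?_⟩
    · rw [← cM, Set.ncard_eq_toFinset_card _ fM]
    · rw [← cL, Set.ncard_eq_toFinset_card _ fL]
    · simp only [Set.Finite.mem_toFinset]
      exact fun a ha b hb => meets_comm.1 (hm b hb a ha)
    · simp [Set.union_comm]

theorem config_of_block {k : Type*} [Field k] {d : ℕ} {X : Set (Fin 4 → k)}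
    {𝒜 ℬ P Q : Finset (Submodule k (Fin 4 → k))}
    (sA : ∀ L ∈ 𝒜, ∀ M ∈ 𝒜, L ≠ M → SkewLine L M)
    (sB : ∀ L ∈ ℬ, ∀ M ∈ ℬ, L ≠ M → SkewLine L M)
    (hdis : Disjoint 𝒜 ℬ) (hX : ∀ L ∈ 𝒜 ∪ ℬ, IsLineOn X L)
    (hP : P ⊆ 𝒜) (hQ : Q ⊆ ℬ) (cP : #P = d) (cQ : #Q = d)
    (h : ∀ a ∈ P, ∀ b ∈ Q, MeetsLine a b) : IsQuadricConfig d X (↑P ∪ ↑Q) := by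
  refine ⟨?_, ?_, ↑P, ↑Q, rfl, ?_, ?_, ?_, ?_, ?_⟩
  · rw [← coe_union, Set.ncard_coe_finset,
      card_union_of_disjoint (disjoint_of_subset_left hP (disjoint_of_subset_right hQ hdis))]
    omega
  · rintro L (hL | hL)
    · exact hX L (mem_union_left _ (hP hL))
    · exact hX L (mem_union_right _ (hQ hL))
  · rw [Set.ncard_coe_finset, cP]
  · rw [Set.ncard_coe_finset, cQ]
  · exact fun L hL M hM => sA L (hP hL) M (hP hM)
  · exact fun L hL M hM => sB L (hQ hL) M (hQ hM)
  · exact fun L hL M hM => h L hL M hM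

theorem geom_kA {k : Type*} [Field k] [Infinite k] {p e q : ℕ} (hp : p.Prime) (hchar : CharP k p)
    (hq : q = p ^ e) (hq2 : 2 ≤ q) {A : Matrix (Fin 4) (Fin 4) k} (hA : IsUnit A)
    {𝒜 ℬ : Finset (Submodule k (Fin 4 → k))}
    (sA : ∀ L ∈ 𝒜, ∀ M ∈ 𝒜, L ≠ M → SkewLine L M)
    (hXA : ∀ L ∈ 𝒜, IsLineOn (extremalCone k q A) L)
    (hXB : ∀ L ∈ ℬ, IsLineOn (extremalCone k q A) L) :
    ∀ S ⊆ 𝒜, #S = 3 → #{b ∈ ℬ | ∀ a ∈ S, MeetsLine a b} ≤ q + 1 := by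
  intro S hS c
  obtain ⟨x, y, z, xy, xz, yz, rfl⟩ := card_eq_three.1 c
  have hx : x ∈ 𝒜 := hS (by simp)
  have hy : y ∈ 𝒜 := hS (by simp)
  have hz : z ∈ 𝒜 := hS (by simp)
  apply card_transversals hp hchar hq hq2 hA (hXA x hx) (hXA y hy).1 (hXA z hz).1
    (sA _ hx _ hy xy) (sA _ hx _ hz xz) (sA _ hy _ hz yz)
  intro M hM
  simp only [mem_filter, mem_insert, mem_singleton, forall_eq_or_imp, forall_eq] at hM
  exact ⟨hXB M hM.1, hM.2⟩

theorem geom_comb {k : Type*} [Field k] [Infinite k] {p e q : ℕ} (hp : p.Prime)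
    (hchar : CharP k p)
    (hq : q = p ^ e) (hq2 : 2 ≤ q) {A : Matrix (Fin 4) (Fin 4) k} (hA : IsUnit A)
    {𝒜 ℬ : Finset (Submodule k (Fin 4 → k))}
    (hdbl : IsDoubleTwoD (q + 1) (𝒜 : Set (Submodule k (Fin 4 → k))) ℬ)
    (hXA : ∀ L ∈ 𝒜, IsLineOn (extremalCone k q A) L)
    (hXB : ∀ L ∈ ℬ, IsLineOn (extremalCone k q A) L) :
    CombData (q + 1) 𝒜 ℬ MeetsLine := by
  obtain ⟨cA, cB, lA, lB, sA, sB, dA, dB⟩ := hdbl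
  simp only [mem_coe] at *
  refine ⟨by simpa using cA, by simpa using cB, ?_, ?_,
    geom_kA hp hchar hq hq2 hA sA hXA hXB, ?_, ?_⟩
  · intro a ha
    rw [← dA a ha, ← Set.ncard_coe_finset]
    simp
  · intro b hb
    rw [← dB b hb, ← Set.ncard_coe_finset]
    simp
  · intro T hT c
    have := geom_kA hp hchar hq hq2 hA sB hXB hXA T hT c
    convert this using 5
    exact meets_comm
  · intro S hS T hT cS cT hST a ha b hb h1 h2
    obtain ⟨x, y, z, xy, xz, yz, rfl⟩ := card_eq_three.1 cS
    obtain ⟨x', y', z', xy', xz', yz', rfl⟩ := card_eq_three.1 cT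
    simp only [mem_insert, mem_singleton, forall_eq_or_imp, forall_eq, insert_subset_iff,
      singleton_subset_iff] at *
    obtain ⟨hx, hy, hz⟩ := hS
    obtain ⟨hx', hy', hz'⟩ := hT
    obtain ⟨⟨a11, a12, a13⟩, ⟨a21, a22, a23⟩, ⟨a31, a32, a33⟩⟩ := hST
    exact regulus (lA x hx) (lA y hy) (lA z hz) (sA _ hx _ hy xy) (sA _ hx _ hz xz)
      (sA _ hy _ hz yz) (lB x' hx') (lB y' hy') (lB z' hz') (lB b hb) (sB _ hx' _ hy' xy')
      (sB _ hx' _ hz' xz') (sB _ hy' _ hz' yz') (lA a ha) a11 a12 a13 a21 a22 a23 a31 a32 a33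
      h2.1 h2.2.1 h2.2.2 h1.1 h1.2.1 h1.2.2

end Glue

/-- Let `X` be a smooth extremal surface of degree `d = q+1`
and let `(𝒜, ℬ)` be a double `2d` all of whose `4d` lines lie on `X`.
If `d > 10` or `d < 5`, the lines of `𝒜 ∪ ℬ` can be partitioned into two
quadric configurations on `X`.  Moreover, for `d ≥ 5`, a pair of quadric
configurations with union the lines of a double `2d` on `X` is unique. -/
theorem double_2d_is_union_of_quadric_configs {k : Type*} [Field k] [IsAlgClosed k]
    (p e q : ℕ) (hp : p.Prime) (hchar : CharP k p) (he : 1 ≤ e) (hq : q = p ^ e)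
    (A : Matrix (Fin 4) (Fin 4) k) (hA : IsUnit A)
    (𝒜 ℬ : Set (Submodule k (Fin 4 → k)))
    (hdbl : IsDoubleTwoD (q + 1) 𝒜 ℬ)
    (hX : ∀ L ∈ 𝒜 ∪ ℬ, IsLineOn (extremalCone k q A) L) :
    ((10 < q + 1 ∨ q + 1 < 5) →
      ∃ S₁ S₂ : Set (Submodule k (Fin 4 → k)),
        IsQuadricConfig (q + 1) (extremalCone k q A) S₁ ∧
        IsQuadricConfig (q + 1) (extremalCone k q A) S₂ ∧
        S₁ ∩ S₂ = ∅ ∧ S₁ ∪ S₂ = 𝒜 ∪ ℬ) ∧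
    (5 ≤ q + 1 →
      ∀ S₁ S₂ T₁ T₂ : Set (Submodule k (Fin 4 → k)),
        IsQuadricConfig (q + 1) (extremalCone k q A) S₁ →
        IsQuadricConfig (q + 1) (extremalCone k q A) S₂ →
        IsQuadricConfig (q + 1) (extremalCone k q A) T₁ →
        IsQuadricConfig (q + 1) (extremalCone k q A) T₂ →
        S₁ ∪ S₂ = 𝒜 ∪ ℬ → T₁ ∪ T₂ = 𝒜 ∪ ℬ →
        (S₁ = T₁ ∧ S₂ = T₂) ∨ (S₁ = T₂ ∧ S₂ = T₁)) := by
  classical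
  have hq2 : 2 ≤ q := by
    rw [hq]
    exact hp.two_le.trans (Nat.le_self_pow (by omega) p)
  have : Infinite k := IsAlgClosed.instInfinite
  have fA : 𝒜.Finite := Set.finite_of_ncard_pos (by rw [hdbl.1]; omega)
  have fB : ℬ.Finite := Set.finite_of_ncard_pos (by rw [hdbl.2.1]; omega)
  obtain ⟨FA, rfl⟩ := fA.exists_finset_coe
  obtain ⟨FB, rfl⟩ := fB.exists_finset_coe
  have hXA : ∀ L ∈ FA, IsLineOn (extremalCone k q A) L := fun L hL => hX L (Or.inl hL)
  have hXB : ∀ L ∈ FB, IsLineOn (extremalCone k q A) L := fun L hL => hX L (Or.inr hL)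
  have H := geom_comb hp hchar hq hq2 hA hdbl hXA hXB
  obtain ⟨-, -, lA, lB, sA, sB, -, -⟩ := hdbl
  have hdis : Disjoint FA FB := by
    rw [Finset.disjoint_left]
    intro L hLA hLB
    have h1 := H.dA L hLA
    have h2 : {b ∈ FB | MeetsLine L b} ⊆ {L} := by
      intro M hM
      rw [Finset.mem_filter] at hM
      rw [Finset.mem_singleton]
      by_contra hne
      exact hM.2 (sB L hLB M hM.1 (Ne.symm hne))
    have h3 := Finset.card_le_card h2
    rw [Finset.card_singleton] at h3
    omega
  have hX' : ∀ L ∈ FA ∪ FB, IsLineOn (extremalCone k q A) L := fun L hL => hX L (by simpa using hL)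
  have cA := H.cA
  have cB := H.cB
  constructor
  · intro hd
    obtain ⟨S, hS, T, hT, cS, cT, h1, h2⟩ := H.main (by omega) hd
    refine ⟨↑S ∪ ↑T, ↑(FA \ S) ∪ ↑(FB \ T),
      config_of_block sA sB hdis hX' hS hT cS cT h1,
      config_of_block sA sB hdis hX' Finset.sdiff_subset Finset.sdiff_subset ?_ ?_ h2, ?_, ?_⟩
    · rw [Finset.card_sdiff_of_subset hS]; omega
    · rw [Finset.card_sdiff_of_subset hT]; omega
    · ext L
      have : L ∈ FA → L ∉ FB := fun h => Finset.disjoint_left.1 hdis h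
      have := @hS L
      have := @hT L
      simp only [Set.mem_inter_iff, Set.mem_union, Finset.mem_coe, Finset.mem_sdiff,
        Set.mem_empty_iff_false]
      tauto
    · ext L
      have := @hS L
      have := @hT L
      simp only [Set.mem_union, Finset.mem_coe, Finset.mem_sdiff]
      tauto
  · intro hd S₁ S₂ T₁ T₂ hS₁ hS₂ hT₁ hT₂ hS hT
    have key : ∀ T, IsQuadricConfig (q + 1) (extremalCone k q A) T → T ⊆ ↑FA ∪ ↑FB →
        T = S₁ ∨ T = S₂ := by
      intro T hT hTs
      obtain ⟨P₁, hP₁, Q₁, hQ₁, cP₁, cQ₁, m₁, e₁⟩ := config_split (by omega) sA sB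
        (hS ▸ Set.subset_union_left) hS₁
      obtain ⟨P₂, hP₂, Q₂, hQ₂, cP₂, cQ₂, m₂, e₂⟩ := config_split (by omega) sA sB
        (hS ▸ Set.subset_union_right) hS₂
      obtain ⟨P, hP, Q, hQ, cP, cQ, m, e⟩ := config_split (by omega) sA sB hTs hT
      have hsub : P ⊆ (P₁ ∩ P) ∪ (P₂ ∩ P) := by
        intro L hL
        have hLA := hP hL
        have : L ∈ S₁ ∪ S₂ := by rw [hS]; exact Or.inl hLA
        have hnB : L ∉ FB := Finset.disjoint_left.1 hdis hLA
        have n1 : L ∉ Q₁ := fun h => hnB (hQ₁ h)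
        have n2 : L ∉ Q₂ := fun h => hnB (hQ₂ h)
        rw [e₁, e₂] at this
        simp only [Set.mem_union, Finset.mem_coe] at this
        simp only [Finset.mem_union, Finset.mem_inter]
        tauto
      have hcard := (Finset.card_le_card hsub).trans (Finset.card_union_le _ _)
      rcases (show 3 ≤ (P₁ ∩ P).card ∨ 3 ≤ (P₂ ∩ P).card by omega) with h | h
      · obtain ⟨r1, r2⟩ := H.uniq (by omega) hP₁ hP hQ₁ hQ cP₁ cP cQ₁ cQ m₁ m h
        left; rw [e, e₁, r1, r2]
      · obtain ⟨r1, r2⟩ := H.uniq (by omega) hP₂ hP hQ₂ hQ cP₂ cP cQ₂ cQ m₂ m h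
        right; rw [e, e₂, r1, r2]
    have hne : T₁ ≠ T₂ := by
      rintro rfl
      rw [Set.union_self] at hT
      have h1 := hT₁.1
      rw [hT, ← Finset.coe_union, Set.ncard_coe_finset, Finset.card_union_of_disjoint hdis] at h1
      omega
    rcases key T₁ hT₁ (hT ▸ Set.subset_union_left) with h1 | h1 <;>
    rcases key T₂ hT₂ (hT ▸ Set.subset_union_right) with h2 | h2
    · exact absurd (h1.trans h2.symm) hne
    · exact Or.inl ⟨h1.symm, h2.symm⟩
    · exact Or.inr ⟨h2.symm, h1.symm⟩
    · exact absurd (h1.trans h2.symm) hne
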